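/- Let σ be an abelian 2-free morphism, i.e. a morphism such that σ(u) is abelian 2-free whenever u is abelian 2-free. If w is a word with |w| ≥ 2 that avoids abelian 2-powers cyclically, then σ(w) avoids abelian 2-powers cyclically. -/

import Mathlib

/-- `u` is an abelian `N`-power of period `m`: a concatenation of `N` nonempty
pairwise abelian-equivalent words of common length `m`. -/
def IsAbelianPower {α : Type*} (N m : ℕ) (u : List α) : Prop :=
  0 < m ∧ ∃ f : Fin N → List α,
    u = (List.ofFn f).flatten ∧ (∀ i, (f i).length = m) ∧ ∀ i j, List.Perm (f i) (f j)

/-- `u` occurs in the infinite word `w^ω`, i.e. `u` is a factor of `w^k` for some `k`. -/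
def OccursCyc {α : Type*} (w u : List α) : Prop :=
  ∃ k : ℕ, u <:+: (List.replicate k w).flatten

/-- `w` avoids abelian `N`-powers cyclically: every abelian `N`-power of period `m`
occurring in `w^ω` satisfies `m ≥ |w|`. -/
def AvoidsAbelianCyc {α : Type*} (N : ℕ) (w : List α) : Prop :=
  ∀ m u, IsAbelianPower N m u → OccursCyc w u → w.length ≤ m

/-- Application of a morphism given by its images on letters. -/
def applyMorphism {α β : Type*} (σ : α → List β) (w : List α) : List β :=
  (w.map σ).flatten

/-- A word is abelian N-free if it contains no abelian N-power as a factor. -/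
def AbelianNFree {α : Type*} (N : ℕ) (u : List α) : Prop :=
  ¬ ∃ (m : ℕ) (v : List α), IsAbelianPower N m v ∧ v <:+: u

/-!
An abelian square of period `m < |z|` in `z^ω` is a prefix of `yy` for some conjugate `y` of `z`.
If it is longer than `y`, then `y = qrt` and the square is `(qr)(tq)`: cancelling `q` shows that
`rt` is an abelian square. So `z` avoids abelian squares cyclically as soon as all its conjugates
are abelian square-free.

For `z = σ(w)`, cutting inside the image of a letter `c` shows that every conjugate of `z` is a
factor of some `σ(cvc)` with `cv` a conjugate of `w`. Since `|cvc| = |w| + 1 < 2|w|`, the word `cvc`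
is too short to contain an abelian square of period at least `|w|`, so it is abelian square-free.
-/

open List

section Powers

variable {α : Type*}

theorem flatten_replicate_succ_append (k : ℕ) (s r : List α) :
    (replicate (k + 1) (r ++ s)).flatten = r ++ (replicate k (s ++ r)).flatten ++ s := by
  induction k with
  | zero => simp
  | succ k ih =>
    rw [replicate_succ, flatten_cons, ih, replicate_succ, flatten_cons]
    simp only [append_assoc]

theorem flatten_replicate_prefix {k n : ℕ} (h : k ≤ n) (z : List α) :
    (replicate k z).flatten <+: (replicate n z).flatten := by
  obtain ⟨d, rfl⟩ := Nat.exists_eq_add_of_le h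
  rw [replicate_add, flatten_append]
  exact prefix_append _ _

theorem prefix_flatten_replicate_of_length_le {k n : ℕ} {z u : List α}
    (h : u <+: (replicate k z).flatten) (hu : u.length ≤ n * z.length) :
    u <+: (replicate n z).flatten :=
  prefix_of_prefix_length_le
    (h.trans (flatten_replicate_prefix (Nat.le_add_right k n) z))
    (flatten_replicate_prefix (Nat.le_add_left n k) z)
    (by simpa using hu)

theorem exists_append_of_isRotated {z z' : List α} (h : z ~r z') :
    ∃ s r, z = s ++ r ∧ z' = r ++ s := by
  obtain ⟨n, hn, rfl⟩ := isRotated_iff_mod.1 h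
  exact ⟨z.take n, z.drop n, (take_append_drop n z).symm, rotate_eq_drop_append_take hn⟩

end Powers

namespace OccursCyc

variable {α : Type*}

theorem of_isRotated {z z' u : List α} (hu : OccursCyc z u) (h : z ~r z') : OccursCyc z' u := by
  obtain ⟨k, hk⟩ := hu
  obtain ⟨s, r, rfl, rfl⟩ := exists_append_of_isRotated h
  refine ⟨k + 1, hk.trans ?_⟩
  rw [flatten_replicate_succ_append]
  exact infix_append r _ s

theorem of_infix {z u v : List α} (hv : OccursCyc z v) (h : u <:+: v) : OccursCyc z u :=
  hv.imp fun _ hk => h.trans hk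

theorem exists_isRotated_prefix {z u : List α} (h : OccursCyc z u) :
    ∃ z', z ~r z' ∧ ∃ k, u <+: (replicate k z').flatten := by
  obtain ⟨k, s, t, hst⟩ := h
  replace hst : s ++ u <+: (replicate k z).flatten := ⟨t, hst⟩
  -- Deleting the first letter of `s` turns the power of `z` into a prefix of a power of the
  -- rotation of `z` by one letter.
  induction s generalizing z k with
  | nil => exact ⟨z, .refl z, k, hst⟩
  | cons a s ih =>
    obtain _ | k := k
    · simp at hst
    obtain _ | ⟨b, z⟩ := z
    · simp at hst
    rw [replicate_succ, flatten_cons, cons_append, cons_append, cons_prefix_cons] at hst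
    have hpre : s ++ u <+: (replicate (k + 1) (z ++ [b])).flatten := by
      rw [flatten_replicate_succ_append]
      exact hst.2.trans (prefix_append _ [b])
    obtain ⟨z', hz', hu⟩ := ih (k + 1) hpre
    exact ⟨z', (isRotated_concat b z).symm.trans hz', hu⟩

end OccursCyc

section AbelianPowers

variable {α : Type*}

theorem IsAbelianPower.length_eq {N m : ℕ} {u : List α} (h : IsAbelianPower N m u) :
    u.length = N * m := by
  obtain ⟨-, f, rfl, hlen, -⟩ := h
  simp [hlen, Function.comp_def]

theorem isAbelianPower_two_iff {m : ℕ} {u : List α} :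
    IsAbelianPower 2 m u ↔ 0 < m ∧ ∃ x y, u = x ++ y ∧ x.length = m ∧ x ~ y := by
  constructor
  · rintro ⟨hm, f, hu, hlen, hperm⟩
    exact ⟨hm, f 0, f 1, by simpa [ofFn_succ] using hu, hlen 0, hperm 0 1⟩
  · rintro ⟨hm, x, y, hu, hlen, hperm⟩
    refine ⟨hm, ![x, y], by simpa [ofFn_succ] using hu, ?_, ?_⟩
    · simp [Fin.forall_fin_two, hlen, ← hperm.length_eq]
    · simp [Fin.forall_fin_two, hperm, hperm.symm]

theorem AbelianNFree.of_infix {N : ℕ} {u v : List α} (hv : AbelianNFree N v) (h : u <:+: v) :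
    AbelianNFree N u := by
  rintro ⟨m, p, hp, hpu⟩
  exact hv ⟨m, p, hp, hpu.trans h⟩

theorem AvoidsAbelianCyc.abelianNFree_of_occursCyc {N : ℕ} {w u : List α}
    (hw : AvoidsAbelianCyc N w) (hu : OccursCyc w u) (hlen : u.length < N * w.length) :
    AbelianNFree N u := by
  rintro ⟨m, p, hp, hpu⟩
  have hm : w.length ≤ m := hw m p hp (hu.of_infix hpu)
  have hle : N * m ≤ u.length := hp.length_eq ▸ hpu.length_le
  exact absurd (Nat.mul_le_mul_left N hm) (by omega)

theorem AbelianNFree.not_perm_of_infix {u x y : List α} (hu : AbelianNFree 2 u)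
    (h : x ++ y <:+: u) (hx : x ≠ []) : ¬ x ~ y := fun hperm =>
  hu ⟨x.length, x ++ y,
    isAbelianPower_two_iff.2 ⟨length_pos_iff.2 hx, x, y, rfl, rfl, hperm⟩, h⟩

theorem AbelianNFree.not_perm_of_prefix_append_self {z x y : List α} (hz : AbelianNFree 2 z)
    (h : x ++ y <+: z ++ z) (hx : x ≠ []) (hlt : x.length < z.length) : ¬ x ~ y := by
  intro hperm
  obtain ⟨t, rfl⟩ : x <+: z :=
    prefix_of_prefix_length_le ((prefix_append x y).trans h) (prefix_append z z) hlt.le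
  have hy : y <+: t ++ (x ++ t) := by rwa [append_assoc, prefix_append_right_inj] at h
  rcases prefix_or_prefix_of_prefix hy (prefix_append t _) with hyt | ⟨q, rfl⟩
  · exact hz.not_perm_of_infix ((prefix_append_right_inj x).2 hyt).isInfix hx hperm
  · have hq : q <+: x ++ t := (prefix_append_right_inj t).1 hy
    have hqx : q.length ≤ x.length := by simp [hperm.length_eq]
    obtain ⟨r, rfl⟩ : q <+: x := prefix_of_prefix_length_le hq (prefix_append x t) hqx
    have hrt : r ~ t := (perm_append_left_iff q).1 (hperm.trans perm_append_comm)
    have hr : r ≠ [] := by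
      rintro rfl
      simp [nil_perm.1 hrt] at hlt
    exact hz.not_perm_of_infix ⟨q, [], by simp⟩ hr hrt

theorem avoidsAbelianCyc_two_of_forall_isRotated {z : List α}
    (h : ∀ z', z ~r z' → AbelianNFree 2 z') : AvoidsAbelianCyc 2 z := by
  intro m u hu hocc
  by_contra! hlt
  obtain ⟨z', hz', k, hpre⟩ := hocc.exists_isRotated_prefix
  rw [hz'.perm.length_eq] at hlt
  have hpre_sq : u <+: z' ++ z' := by
    simpa [replicate_succ] using
      prefix_flatten_replicate_of_length_le (n := 2) hpre (by rw [hu.length_eq]; omega)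
  obtain ⟨hm, x, y, rfl, rfl, hperm⟩ := isAbelianPower_two_iff.1 hu
  exact (h z' hz').not_perm_of_prefix_append_self hpre_sq (length_pos_iff.1 hm) hlt hperm

end AbelianPowers

section Morphisms

variable {α β : Type*}

theorem applyMorphism_cons (σ : α → List β) (c : α) (w : List α) :
    applyMorphism σ (c :: w) = σ c ++ applyMorphism σ w :=
  flatMap_cons

theorem exists_cut_of_applyMorphism_eq_append {σ : α → List β} {w : List α} {s r : List β}
    (h : applyMorphism σ w = s ++ r) (hw : w ≠ []) :
    ∃ a c b C D, w = a ++ c :: b ∧ σ c = C ++ D ∧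
      s = applyMorphism σ a ++ C ∧ r = D ++ applyMorphism σ b := by
  induction w generalizing s with
  | nil => contradiction
  | cons c w ih =>
    rw [applyMorphism_cons, append_eq_append_iff] at h
    obtain ⟨e, rfl, he⟩ | ⟨e, hc, rfl⟩ := h
    · rcases eq_or_ne w [] with rfl | hw'
      · obtain ⟨rfl, rfl⟩ : e = [] ∧ r = [] := append_eq_nil_iff.1 he.symm
        exact ⟨[], c, [], σ c, [], rfl, (append_nil _).symm, append_nil _, rfl⟩
      · obtain ⟨a, d, b, C, D, rfl, hd, rfl, rfl⟩ := ih he hw'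
        exact ⟨c :: a, d, b, C, D, rfl, hd, by simp [applyMorphism_cons], rfl⟩
    · exact ⟨[], c, w, s, e, rfl, hc, rfl, rfl⟩

theorem exists_infix_applyMorphism_of_isRotated {σ : α → List β} {w : List α} {z : List β}
    (h : applyMorphism σ w ~r z) (hw : w ≠ []) :
    ∃ c v, w ~r c :: v ∧ z <:+: applyMorphism σ (c :: v ++ [c]) := by
  obtain ⟨s, r, hsr, rfl⟩ := exists_append_of_isRotated h
  obtain ⟨a, c, b, C, D, rfl, hc, rfl, rfl⟩ := exists_cut_of_applyMorphism_eq_append hsr hw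
  refine ⟨c, b ++ a, isRotated_append, C, D, ?_⟩
  simp [applyMorphism, hc]

end Morphisms

theorem abelian_square_free_morphism_preserves_cyclic_avoidance
    {α β : Type*} (σ : α → List β)
    (hσ : ∀ u : List α, AbelianNFree 2 u → AbelianNFree 2 (applyMorphism σ u))
    (w : List α) (hw : 2 ≤ w.length) (havoid : AvoidsAbelianCyc 2 w) :
    AvoidsAbelianCyc 2 (applyMorphism σ w) := by
  have hw_ne : w ≠ [] := length_pos_iff.1 (by omega)
  refine avoidsAbelianCyc_two_of_forall_isRotated fun z hz => ?_
  obtain ⟨c, v, hwv, hzv⟩ := exists_infix_applyMorphism_of_isRotated hz hw_ne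
  have hocc : OccursCyc w (c :: v ++ [c]) :=
    OccursCyc.of_isRotated ⟨2, [], v, by simp [replicate_succ]⟩ hwv.symm
  have hlen : (c :: v ++ [c]).length < 2 * w.length := by
    have hw_len : w.length = v.length + 1 := hwv.perm.length_eq
    simp only [cons_append, length_cons, length_append, length_nil]
    omega
  exact (hσ _ (havoid.abelianNFree_of_occursCyc hocc hlen)).of_infix hzv
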